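/- Let Q₁ be an N×N real matrix (N ≥ 2) with Q₁·u = 0 and Q₁ᵀ·u = 0 for the all-ones vector u (a balanced directed Laplacian), such that S := (Q₁ + Q₁ᵀ)/2 is positive semidefinite, and let p ≥ 0. Consider the multiplex in which the second layer is the direction-reversed copy of the first, Q₂ = Q₁ᵀ, with supra-Laplacian Q. Then: (i) the symmetric part of the similarity-transformed matrix Q̃ = [[(Q₁+Q₂)/2, (Q₂−Q₁)/2], [(Q₂−Q₁)/2, (Q₁+Q₂)/2 + 2p·I]] is the block-diagonal matrix diag(S, S + 2p·I); and (ii) the second smallest element of the multiset of real parts of the eigenvalues of Q satisfies Reλ₂(Q) ≥ min( λ₂(S), 2p ). In particular, for p ≥ λ₂(S)/2, the diffusion rate of the multiplex is at least that of the aggregated network S = (Q₁+Q₂)/2. -/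

import Mathlib

open Matrix

/-- The second smallest element of a multiset of real numbers
(the second entry of the multiset sorted in non-decreasing order). -/
noncomputable def secondSmallest (s : Multiset ℝ) : ℝ :=
  (s.sort (· ≤ ·)).getD 1 0

/-- The second smallest real part of the eigenvalues of a real square matrix, computed
from the complex roots (with multiplicity) of its characteristic polynomial. -/
noncomputable def reLambda2 {n : Type*} [Fintype n] [DecidableEq n]
    (M : Matrix n n ℝ) : ℝ :=
  secondSmallest (((M.map (Complex.ofReal ·)).charpoly.roots).map Complex.re)

/-- The second smallest real eigenvalue of a real square matrix (second smallest real
root of its characteristic polynomial, with multiplicity); for a real symmetric matrix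
this is its second smallest eigenvalue. -/
noncomputable def lambda2 {n : Type*} [Fintype n] [DecidableEq n]
    (M : Matrix n n ℝ) : ℝ :=
  (M.charpoly.roots.sort (· ≤ ·)).getD 1 0

open Polynomial in
theorem brauer_charpoly {n K : Type*} [Fintype n] [DecidableEq n] [Field K]
    (M V : Matrix n n K) (h : M * V = 0) :
    M.charpoly * V.charpoly = X ^ Fintype.card n * (M + V).charpoly := by
  unfold Matrix.charpoly
  rw [← Matrix.det_mul, ← Matrix.det_smul]
  congr 1
  have hMV : (C.mapMatrix M : Matrix n n K[X]) * C.mapMatrix V = 0 := by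
    rw [← map_mul, h, map_zero]
  simp only [charmatrix, map_add, sub_mul, mul_sub, hMV]
  have e : (Matrix.scalar n (X : K[X])) = (X : K[X]) • (1 : Matrix n n K[X]) := by
    rw [Matrix.scalar_apply, Matrix.smul_one_eq_diagonal]
  rw [e]
  simp only [Matrix.smul_mul, Matrix.mul_smul, Matrix.one_mul, Matrix.mul_one, smul_sub, smul_add]
  abel

open Polynomial in
theorem brauer_roots {n K : Type*} [Fintype n] [DecidableEq n] [Nonempty n] [Field K]
    (M : Matrix n n K) (w v : n → K) (h : M *ᵥ w = 0) :
    M.charpoly.roots + {w ⬝ᵥ v} = (M + vecMulVec w v).charpoly.roots + {0} := by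
  classical
  have hp : 0 < Fintype.card n := Fintype.card_pos
  have hMV : M * vecMulVec w v = 0 := by
    rw [Matrix.mul_vecMulVec, h]; ext; simp [vecMulVec_apply]
  have key := brauer_charpoly M (vecMulVec w v) hMV
  have e : (vecMulVec w v).charpoly = X ^ (Fintype.card n - 1) * (X - C (w ⬝ᵥ v)) := by
    rw [charpoly_vecMulVec, mul_sub, ← pow_succ, Nat.sub_add_cancel hp, smul_eq_C_mul, mul_comm (C _)]
  rw [e] at key
  have key2 : M.charpoly * (X - C (w ⬝ᵥ v)) = X * (M + vecMulVec w v).charpoly := by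
    apply mul_left_cancel₀ (pow_ne_zero (Fintype.card n - 1) (X_ne_zero (R := K)))
    rw [← mul_assoc, mul_comm _ M.charpoly, mul_assoc, key, ← mul_assoc, ← pow_succ,
      Nat.sub_add_cancel hp]
  have h1 : M.charpoly * (X - C (w ⬝ᵥ v)) ≠ 0 :=
    mul_ne_zero M.charpoly_monic.ne_zero (X_sub_C_ne_zero _)
  have h2 := congrArg roots key2
  rw [roots_mul h1, roots_mul (key2 ▸ h1), roots_X_sub_C, roots_X] at h2
  rw [h2, add_comm]

/-- Deflation: the roots of `M` are `0` plus a remainder shared with the rank one update. -/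
theorem brauer_roots' {n K : Type*} [Fintype n] [DecidableEq n] [Nonempty n] [Field K]
    (M : Matrix n n K) (w : n → K) (h : M *ᵥ w = 0) (hw : w ⬝ᵥ w ≠ 0) :
    ∃ R : Multiset K, M.charpoly.roots = 0 ::ₘ R ∧
      ∀ t : K, (M + vecMulVec w (t • w)).charpoly.roots = (t * (w ⬝ᵥ w)) ::ₘ R := by
  have h0 : (0 : K) ∈ M.charpoly.roots := by
    have := brauer_roots M w w h
    have h3 : (0 : K) ∈ M.charpoly.roots + {w ⬝ᵥ w} := by rw [this]; simp
    rcases Multiset.mem_add.1 h3 with h4 | h4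
    · exact h4
    · exact absurd (Multiset.mem_singleton.1 h4).symm hw
  obtain ⟨R, hR⟩ := Multiset.exists_cons_of_mem h0
  refine ⟨R, hR, fun t => ?_⟩
  have := brauer_roots M w (t • w) h
  rw [hR, dotProduct_smul, smul_eq_mul, Multiset.cons_add, ← Multiset.singleton_add,
    add_comm (_ : Multiset K) {0}] at this
  rw [← add_left_cancel this, add_comm, Multiset.singleton_add]

theorem secondSmallest_cons (R : Multiset ℝ) (hR : ∀ b ∈ R, 0 ≤ b) (hne : R ≠ 0) :
    secondSmallest (0 ::ₘ R) ∈ R ∧ ∀ b ∈ R, secondSmallest (0 ::ₘ R) ≤ b := by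
  unfold secondSmallest
  rw [Multiset.sort_cons _ _ _ hR]
  have hs : ∀ b, b ∈ R.sort (· ≤ ·) ↔ b ∈ R := fun b => Multiset.mem_sort _
  have hp := Multiset.pairwise_sort R (· ≤ ·)
  cases hl : R.sort (· ≤ ·) with
  | nil =>
    exfalso
    obtain ⟨b, hb⟩ := Multiset.exists_mem_of_ne_zero hne
    have := (hs b).2 hb
    simp [hl] at this
  | cons a l =>
    rw [hl] at hp hs
    simp only [List.getD_cons_succ, List.getD_cons_zero]
    refine ⟨(hs a).1 (by simp), fun b hb => ?_⟩
    have := (hs b).2 hb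
    rcases List.mem_cons.1 this with h | h
    · exact h ▸ le_refl _
    · exact (List.pairwise_cons.1 hp).1 b h

/-- Real parts of the complex eigenvalues are bounded below by a bound for the quadratic form. -/
theorem re_root_ge {n : Type*} [Fintype n] [DecidableEq n] (M : Matrix n n ℝ) (l : ℝ)
    (h : ∀ x : n → ℝ, l * (x ⬝ᵥ x) ≤ x ⬝ᵥ (M *ᵥ x)) (z : ℂ)
    (hz : z ∈ (M.map (Complex.ofReal ·)).charpoly.roots) : l ≤ z.re := by
  have hz' := Polynomial.isRoot_of_mem_roots hz
  rw [Polynomial.IsRoot, Matrix.eval_charpoly] at hz'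
  obtain ⟨v, hv, hv0⟩ := Matrix.exists_mulVec_eq_zero_iff.2 hz'
  rw [Matrix.sub_mulVec, sub_eq_zero] at hv0
  set x : n → ℝ := fun i => (v i).re with hx
  set y : n → ℝ := fun i => (v i).im with hy
  have hi : ∀ i, z * v i = ∑ j, (M i j : ℂ) * v j := by
    intro i
    have := congrFun hv0 i
    simpa [Matrix.mulVec, dotProduct, Matrix.diagonal_apply] using this
  have hre : M *ᵥ x = z.re • x - z.im • y := by
    ext i
    have := congrArg Complex.re (hi i)
    simp [Complex.re_sum] at this
    simp [Matrix.mulVec, dotProduct, hx, hy, this]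
  have him : M *ᵥ y = z.re • y + z.im • x := by
    ext i
    have := congrArg Complex.im (hi i)
    simp [Complex.im_sum] at this
    simp [Matrix.mulVec, dotProduct, hx, hy, this]
  have a1 := h x
  have a2 := h y
  rw [hre, dotProduct_sub, dotProduct_smul, dotProduct_smul, smul_eq_mul, smul_eq_mul] at a1
  rw [him, dotProduct_add, dotProduct_smul, dotProduct_smul, smul_eq_mul, smul_eq_mul,
    dotProduct_comm y x] at a2
  have hpos : 0 < x ⬝ᵥ x + y ⬝ᵥ y := by
    obtain ⟨i, hne⟩ := Function.ne_iff.1 hv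
    have : x ⬝ᵥ x + y ⬝ᵥ y = ∑ i, Complex.normSq (v i) := by
      simp [dotProduct, hx, hy, Complex.normSq_apply, Finset.sum_add_distrib]
    rw [this]
    exact Finset.sum_pos' (fun i _ => Complex.normSq_nonneg _)
      ⟨i, Finset.mem_univ _, Complex.normSq_pos.2 hne⟩
  nlinarith

/-- Quadratic form bound for a symmetric matrix from its charpoly roots. -/
theorem quad_ge {n : Type*} [Fintype n] [DecidableEq n] (A : Matrix n n ℝ) (hA : A.IsHermitian)
    (l : ℝ) (h : ∀ r ∈ A.charpoly.roots, l ≤ r) (x : n → ℝ) :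
    l * (x ⬝ᵥ x) ≤ x ⬝ᵥ (A *ᵥ x) := by
  have hB : (A - l • (1 : Matrix n n ℝ)).IsHermitian := by
    have h1 : A.transpose = A := by simpa using hA.eq
    rw [Matrix.IsHermitian]
    simp [h1]
  have hps : (A - l • (1 : Matrix n n ℝ)).PosSemidef := by
    rw [hB.posSemidef_iff_eigenvalues_nonneg]
    intro i
    have hm := hB.eigenvalues_mem_spectrum_real i
    rw [Matrix.mem_spectrum_iff_isRoot_charpoly, Polynomial.IsRoot, Matrix.eval_charpoly] at hm
    have : l ≤ hB.eigenvalues i + l := by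
      apply h
      rw [Polynomial.mem_roots A.charpoly_monic.ne_zero, Polynomial.IsRoot, Matrix.eval_charpoly,
        ← hm]
      congr 1
      rw [map_add, Matrix.scalar_apply l, ← Matrix.smul_one_eq_diagonal]
      abel
    simpa using this
  have := hps.dotProduct_mulVec_nonneg x
  simp only [star_trivial, Matrix.sub_mulVec, Matrix.smul_mulVec, Matrix.one_mulVec,
    dotProduct_sub, dotProduct_smul, smul_eq_mul] at this
  linarith

/-- `λ₂` variational bound. -/
theorem lambda2_bound {N : ℕ} (hN : 2 ≤ N) (S : Matrix (Fin N) (Fin N) ℝ) (hS : S.PosSemidef)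
    (u : Fin N → ℝ) (huu : u ⬝ᵥ u = N) (h0 : S *ᵥ u = 0) :
    0 ≤ lambda2 S ∧ ∀ x : Fin N → ℝ,
      lambda2 S * (x ⬝ᵥ x) ≤ x ⬝ᵥ (S *ᵥ x) + lambda2 S / N * (u ⬝ᵥ x) ^ 2 := by
  haveI : Nonempty (Fin N) := ⟨⟨0, by omega⟩⟩
  have hNpos : (0 : ℝ) < N := by exact_mod_cast (by omega : 0 < N)
  obtain ⟨R, hR, hRt⟩ := brauer_roots' S u h0 (by rw [huu]; exact hNpos.ne')
  have hroots : ∀ r ∈ S.charpoly.roots, 0 ≤ r := by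
    intro r hr
    rw [hS.1.roots_charpoly_eq_eigenvalues] at hr
    obtain ⟨i, -, rfl⟩ := Multiset.mem_map.1 hr
    exact hS.eigenvalues_nonneg i
  have hcard : Multiset.card S.charpoly.roots = N := by
    rw [hS.1.roots_charpoly_eq_eigenvalues]; simp
  have hRne : R ≠ 0 := by
    rintro rfl
    rw [hR] at hcard
    simp at hcard
    omega
  have hRnn : ∀ b ∈ R, 0 ≤ b := fun b hb => hroots b (by rw [hR]; exact Multiset.mem_cons_of_mem hb)
  obtain ⟨m1, m2⟩ := secondSmallest_cons R hRnn hRne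
  have hl : lambda2 S = secondSmallest (0 ::ₘ R) := by
    rw [← hR]; rfl
  rw [← hl] at m1 m2
  refine ⟨hRnn _ m1, fun x => ?_⟩
  have hT : S.transpose = S := by simpa using hS.1.eq
  have hH : (S + vecMulVec u ((lambda2 S / N) • u)).IsHermitian := by
    rw [Matrix.IsHermitian, Matrix.conjTranspose_eq_transpose_of_trivial, Matrix.transpose_add, hT]
    congr 1
    ext i j
    simp [vecMulVec_apply]; ring
  have := quad_ge _ hH (lambda2 S) (by
    intro r hr
    rw [hRt] at hr
    rcases Multiset.mem_cons.1 hr with h | h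
    · rw [h, huu, div_mul_cancel₀ _ hNpos.ne']
    · exact m2 r h) x
  refine this.trans (le_of_eq ?_)
  rw [Matrix.add_mulVec, dotProduct_add, Matrix.vecMulVec_mulVec]
  simp [dotProduct_comm x u]
  ring

theorem main_bound
    (N : ℕ) (hN : 2 ≤ N) (Q1 : Matrix (Fin N) (Fin N) ℝ)
    (u : Fin N → ℝ) (hu : u = fun _ => (1 : ℝ))
    (h1 : Q1.mulVec u = 0) (h2 : Q1ᵀ.mulVec u = 0)
    (S : Matrix (Fin N) (Fin N) ℝ) (hS : S = (1 / 2 : ℝ) • (Q1 + Q1ᵀ))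
    (hpsd : S.PosSemidef) (p : ℝ) (hp : 0 ≤ p) :
    reLambda2 (Matrix.fromBlocks (Q1 + p • 1) (-(p • 1)) (-(p • 1)) (Q1ᵀ + p • 1)) ≥
        min (lambda2 S) (2 * p) := by
  have hNpos : (0 : ℝ) < N := by exact_mod_cast (by omega : 0 < N)
  haveI : Nonempty (Fin N) := ⟨⟨0, by omega⟩⟩
  have huu : u ⬝ᵥ u = N := by simp [hu, dotProduct]
  have hSu : S *ᵥ u = 0 := by
    rw [hS, Matrix.smul_mulVec, Matrix.add_mulVec, h1, h2]; simp
  obtain ⟨hl0, hvar⟩ := lambda2_bound hN S hpsd u huu hSu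
  set L := lambda2 S with hL
  set Q := Matrix.fromBlocks (Q1 + p • 1) (-(p • 1)) (-(p • 1)) (Q1ᵀ + p • 1) with hQ
  set w : Fin N ⊕ Fin N → ℝ := Sum.elim u u with hw
  have hQw : Q *ᵥ w = 0 := by
    rw [hQ, hw, Matrix.fromBlocks_mulVec]
    simp [Matrix.add_mulVec, Matrix.neg_mulVec, Matrix.smul_mulVec, h1, h2]
  have hS' : ∀ x, x ⬝ᵥ (Q1 *ᵥ x) = x ⬝ᵥ (S *ᵥ x) := by
    intro x
    rw [hS, Matrix.smul_mulVec, Matrix.add_mulVec, dotProduct_smul, dotProduct_add,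
      Matrix.mulVec_transpose, dotProduct_comm x (x ᵥ* Q1), ← Matrix.dotProduct_mulVec, smul_eq_mul]
    ring
  have hS'' : ∀ x, x ⬝ᵥ (Q1ᵀ *ᵥ x) = x ⬝ᵥ (S *ᵥ x) := by
    intro x
    rw [← hS', Matrix.mulVec_transpose, dotProduct_comm x (x ᵥ* Q1), ← Matrix.dotProduct_mulVec]
  have hform : ∀ x : Fin N ⊕ Fin N → ℝ, min L (2 * p) * (x ⬝ᵥ x) ≤
      x ⬝ᵥ ((Q + vecMulVec w ((L / (2 * N)) • w)) *ᵥ x) := by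
    intro x
    obtain ⟨a, b, rfl⟩ : ∃ a b, x = Sum.elim a b := ⟨x ∘ Sum.inl, x ∘ Sum.inr, by simp⟩
    have e1 : Sum.elim a b ⬝ᵥ (Q *ᵥ Sum.elim a b) = a ⬝ᵥ (S *ᵥ a) + b ⬝ᵥ (S *ᵥ b)
        + p * ((a - b) ⬝ᵥ (a - b)) := by
      rw [hQ, Matrix.fromBlocks_mulVec, sumElim_dotProduct_sumElim]
      simp only [Sum.elim_comp_inl, Sum.elim_comp_inr, Matrix.add_mulVec, Matrix.neg_mulVec,
        Matrix.smul_mulVec, Matrix.one_mulVec, dotProduct_add, dotProduct_neg, dotProduct_smul,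
        dotProduct_sub, sub_dotProduct, smul_eq_mul, hS', hS'', dotProduct_comm b a]
      ring
    rw [Matrix.add_mulVec, dotProduct_add, e1, Matrix.vecMulVec_mulVec]
    have v1 := hvar (a + b)
    have v2 := hpsd.dotProduct_mulVec_nonneg (a - b)
    have n1 : 0 ≤ (a + b) ⬝ᵥ (a + b) := by simpa using dotProduct_star_self_nonneg (a + b)
    have n2 : 0 ≤ (a - b) ⬝ᵥ (a - b) := by simpa using dotProduct_star_self_nonneg (a - b)
    have m1 := mul_le_mul_of_nonneg_right (min_le_left L (2 * p)) n1
    have m2 := mul_le_mul_of_nonneg_right (min_le_right L (2 * p)) n2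
    have e2 : Sum.elim a b ⬝ᵥ Sum.elim a b =
        ((a + b) ⬝ᵥ (a + b) + (a - b) ⬝ᵥ (a - b)) / 2 := by
      rw [sumElim_dotProduct_sumElim]
      simp only [dotProduct_add, add_dotProduct, dotProduct_sub, sub_dotProduct]
      ring
    have e3 : a ⬝ᵥ (S *ᵥ a) + b ⬝ᵥ (S *ᵥ b) =
        ((a + b) ⬝ᵥ (S *ᵥ (a + b)) + (a - b) ⬝ᵥ (S *ᵥ (a - b))) / 2 := by
      simp only [Matrix.mulVec_add, Matrix.mulVec_sub, dotProduct_add, add_dotProduct,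
        dotProduct_sub, sub_dotProduct]
      ring
    have e4 : Sum.elim a b ⬝ᵥ (MulOpposite.op (((L / (2 * N)) • w) ⬝ᵥ Sum.elim a b) • w) =
        L / N * (u ⬝ᵥ (a + b)) ^ 2 / 2 := by
      rw [op_smul_eq_smul, dotProduct_smul, smul_dotProduct, hw, sumElim_dotProduct_sumElim,
        sumElim_dotProduct_sumElim, dotProduct_add, dotProduct_comm a u, dotProduct_comm b u]
      simp only [smul_eq_mul]
      field_simp
    rw [e2, e3, e4]
    simp only [star_trivial] at v2
    linarith
  -- complexification
  set Qc : Matrix (Fin N ⊕ Fin N) (Fin N ⊕ Fin N) ℂ := Q.map (Complex.ofReal ·) with hQc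
  set wc : Fin N ⊕ Fin N → ℂ := fun i => (w i : ℂ) with hwc
  have hw1 : ∀ i, w i = 1 := by
    rintro (i | i) <;> simp [hw, hu]
  have hwcc : wc ⬝ᵥ wc ≠ 0 := by
    have : wc ⬝ᵥ wc = ((2 * N : ℝ) : ℂ) := by
      simp [dotProduct, hwc, hw1]; ring
    rw [this]
    exact_mod_cast (by positivity : (2 * N : ℝ) ≠ 0)
  have hQcw : Qc *ᵥ wc = 0 := by
    ext i
    have := congrArg (Complex.ofReal) (congrFun hQw i)
    simpa [Matrix.mulVec, dotProduct, hQc, hwc] using this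
  obtain ⟨R, hR, hRt⟩ := brauer_roots' Qc wc hQcw hwcc
  have hRge : ∀ z ∈ R, min L (2 * p) ≤ z.re := by
    intro z hz
    apply re_root_ge _ _ hform
    have e : (Q + vecMulVec w ((L / (2 * N)) • w)).map (Complex.ofReal ·) =
        Qc + vecMulVec wc (((L / (2 * N) : ℝ) : ℂ) • wc) := by
      ext i j
      simp [hQc, hwc, vecMulVec_apply]
    rw [e, hRt]
    exact Multiset.mem_cons_of_mem hz
  have hcard : Multiset.card Qc.charpoly.roots = N + N := by
    rw [← (IsAlgClosed.splits Qc.charpoly).natDegree_eq_card_roots,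
      Matrix.charpoly_natDegree_eq_dim]
    simp
  have hRne : R ≠ 0 := by
    rintro rfl
    rw [hR] at hcard
    simp at hcard
    omega
  have hm0 : 0 ≤ min L (2 * p) := le_min hl0 (by linarith)
  have hRge' : ∀ b ∈ R.map Complex.re, min L (2 * p) ≤ b := by
    intro b hb
    obtain ⟨z, hz, rfl⟩ := Multiset.mem_map.1 hb
    exact hRge z hz
  have key := secondSmallest_cons (R.map Complex.re) (fun b hb => hm0.trans (hRge' b hb))
    (by simpa using hRne)
  have : reLambda2 Q = secondSmallest (0 ::ₘ R.map Complex.re) := by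
    unfold reLambda2
    rw [← hQc, hR, Multiset.map_cons, Complex.zero_re]
  rw [this]
  exact hRge' _ key.1

/-- Coupling a balanced directed layer `Q₁` with its direction-reversed copy `Q₂ = Q₁ᵀ`:
(i) the symmetric part of the similarity-transformed supra-Laplacian `Q̃` is the
block-diagonal matrix `diag(S, S + 2p·I)` with `S = (Q₁+Q₁ᵀ)/2`, and
(ii) `Reλ₂(Q) ≥ min(λ₂(S), 2p)`; in particular for `p ≥ λ₂(S)/2` the diffusion rate of
the multiplex is at least that of the aggregated network `S`. -/
theorem reversed_layer_multiplex_diffusion_bound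
    (N : ℕ) (hN : 2 ≤ N) (Q1 : Matrix (Fin N) (Fin N) ℝ)
    (u : Fin N → ℝ) (hu : u = fun _ => (1 : ℝ))
    (h1 : Q1.mulVec u = 0) (h2 : Q1ᵀ.mulVec u = 0)
    (S : Matrix (Fin N) (Fin N) ℝ) (hS : S = (1 / 2 : ℝ) • (Q1 + Q1ᵀ))
    (hpsd : S.PosSemidef) (p : ℝ) (hp : 0 ≤ p) :
    (1 / 2 : ℝ) •
        (Matrix.fromBlocks ((1 / 2 : ℝ) • (Q1 + Q1ᵀ)) ((1 / 2 : ℝ) • (Q1ᵀ - Q1))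
            ((1 / 2 : ℝ) • (Q1ᵀ - Q1)) ((1 / 2 : ℝ) • (Q1 + Q1ᵀ) + (2 * p) • 1) +
          (Matrix.fromBlocks ((1 / 2 : ℝ) • (Q1 + Q1ᵀ)) ((1 / 2 : ℝ) • (Q1ᵀ - Q1))
            ((1 / 2 : ℝ) • (Q1ᵀ - Q1)) ((1 / 2 : ℝ) • (Q1 + Q1ᵀ) + (2 * p) • 1))ᵀ) =
        Matrix.fromBlocks S 0 0 (S + (2 * p) • 1) ∧
    reLambda2 (Matrix.fromBlocks (Q1 + p • 1) (-(p • 1)) (-(p • 1)) (Q1ᵀ + p • 1)) ≥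
        min (lambda2 S) (2 * p) ∧
    (p ≥ lambda2 S / 2 →
      reLambda2 (Matrix.fromBlocks (Q1 + p • 1) (-(p • 1)) (-(p • 1)) (Q1ᵀ + p • 1)) ≥
        lambda2 S) := by
  have hb := main_bound N hN Q1 u hu h1 h2 S hS hpsd p hp
  refine ⟨?_, hb, fun hpl => ?_⟩
  · subst hS
    rw [Matrix.fromBlocks_transpose, Matrix.fromBlocks_add, Matrix.fromBlocks_smul]
    congr 1 <;> ext i j <;> simp [Matrix.one_apply, eq_comm] <;> try ring_nf
  · rwa [min_eq_left (by linarith)] at hb
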